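/- Let T be a binary tree with n vertices and let T̂ be its completion, the complete binary tree on 2n+1 vertices obtained from T by adding all n+1 possible leaves. Then the number of increasing labelings of T̂ satisfies f^{T̂} = (2n+1)! / ∏_{v ∈ T} (2 h_v + 1), where h_v is the hook length of v computed in T. -/

import Mathlib

/-- A binary tree: `nil` is the empty tree, and a vertex may have an empty or
nonempty left subtree and an empty or nonempty right subtree. -/
inductive BinTree : Type where
  | nil : BinTree
  | node (l r : BinTree) : BinTree
deriving DecidableEq

/-- The number of vertices of a binary tree. -/
def BinTree.size : BinTree → ℕ
  | .nil => 0
  | .node l r => l.size + r.size + 1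

/-- The product, over all vertices `v` of a binary tree, of `f h_v`, where
`h_v` is the hook length of `v` (the number of descendants of `v`, including
`v` itself). -/
def BinTree.hookProd (f : ℕ → ℝ) : BinTree → ℝ
  | .nil => 1
  | .node l r => f (l.size + r.size + 1) * l.hookProd f * r.hookProd f

/-- The vertices of a binary tree, encoded as paths from the root
(`false` = go to left child, `true` = go to right child). -/
def BinTree.positions : BinTree → List (List Bool)
  | .nil => []
  | .node l r =>
      [] :: (l.positions.map (fun p => false :: p) ++ r.positions.map (fun p => true :: p))

/-- The number `f^T` of increasing labelings of a binary tree `T`: bijections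
`ℓ` from the vertices of `T` to `{1, …, |T|}` (here `Fin T.size`) such that
`ℓ v < ℓ w` whenever `w` is a child of `v`. -/
noncomputable def BinTree.incLabelings (T : BinTree) : ℕ :=
  Nat.card {ℓ : {p // p ∈ T.positions} → Fin T.size //
    Function.Bijective ℓ ∧
    ∀ v w : {p // p ∈ T.positions}, (∃ b, (w : List Bool) = (v : List Bool) ++ [b]) → ℓ v < ℓ w}

/-- The completion `T̂` of a binary tree `T`: the complete binary tree on
`2|T|+1` vertices obtained from `T` by adding all `|T|+1` possible leaves. -/
def BinTree.completion : BinTree → BinTree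
  | .nil => .node .nil .nil
  | .node l r => .node l.completion r.completion

namespace HookAux

inductive P : BinTree → Type
  | root {l r : BinTree} : P (.node l r)
  | left {l r : BinTree} : P l → P (.node l r)
  | right {l r : BinTree} : P r → P (.node l r)

def path : {T : BinTree} → P T → List Bool
  | _, .root => []
  | _, .left x => false :: path x
  | _, .right x => true :: path x

def Inc : (T : BinTree) → (P T → ℕ) → Prop
  | .nil, _ => True
  | .node l r, f => (∀ x, f .root < f (.left x)) ∧ (∀ x, f .root < f (.right x)) ∧
      Inc l (fun x => f (.left x)) ∧ Inc r (fun x => f (.right x))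

def equivP (l r : BinTree) : P (.node l r) ≃ Option (P l ⊕ P r) where
  toFun x := match x with
    | .root => none
    | .left x => some (.inl x)
    | .right x => some (.inr x)
  invFun x := match x with
    | none => .root
    | some (.inl x) => .left x
    | some (.inr x) => .right x
  left_inv x := by cases x <;> rfl
  right_inv x := by rcases x with _ | _ | _ <;> rfl

theorem finite_card (T : BinTree) : Finite (P T) ∧ Nat.card (P T) = T.size := by
  induction T with
  | nil =>
    have : IsEmpty (P .nil) := ⟨fun x => by cases x⟩
    exact ⟨inferInstance, by simp [BinTree.size]⟩
  | node l r hl hr =>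
    obtain ⟨h1, h2⟩ := hl
    obtain ⟨h3, h4⟩ := hr
    refine ⟨Finite.of_equiv _ (equivP l r).symm, ?_⟩
    rw [Nat.card_congr (equivP l r), Finite.card_option, Nat.card_sum, h2, h4]
    rfl

instance (T : BinTree) : Finite (P T) := (finite_card T).1

theorem path_inj {T : BinTree} (x y : P T) (h : path x = path y) : x = y := by
  induction T with
  | nil => cases x
  | node l r hl hr =>
    cases x <;> cases y <;> simp [path] at h ⊢
    · exact hl _ _ h
    · exact hr _ _ h

theorem mem_positions {T : BinTree} (p : List Bool) : p ∈ T.positions ↔ ∃ x : P T, path x = p := by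
  induction T generalizing p with
  | nil => simp [BinTree.positions]; intro x; cases x
  | node l r hl hr =>
    simp only [BinTree.positions, List.mem_cons, List.mem_append, List.mem_map, hl, hr]
    constructor
    · rintro (rfl | ⟨_, ⟨x, rfl⟩, rfl⟩ | ⟨_, ⟨x, rfl⟩, rfl⟩)
      · exact ⟨.root, rfl⟩
      · exact ⟨.left x, rfl⟩
      · exact ⟨.right x, rfl⟩
    · rintro ⟨x, rfl⟩
      cases x with
      | root => exact Or.inl rfl
      | left x => exact Or.inr (Or.inl ⟨_, ⟨x, rfl⟩, rfl⟩)
      | right x => exact Or.inr (Or.inr ⟨_, ⟨x, rfl⟩, rfl⟩)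

noncomputable def equivPos (T : BinTree) : P T ≃ {p // p ∈ T.positions} :=
  Equiv.ofBijective (fun x => ⟨path x, (mem_positions _).2 ⟨x, rfl⟩⟩)
    ⟨fun x y h => path_inj x y (congrArg Subtype.val h), fun ⟨p, hp⟩ => by
      obtain ⟨x, rfl⟩ := (mem_positions _).1 hp
      exact ⟨x, rfl⟩⟩

theorem equivPos_val {T : BinTree} (x : P T) : (equivPos T x : List Bool) = path x := rfl

theorem inc_iff {T : BinTree} (f : P T → ℕ) :
    (∀ v w : P T, (∃ b, path w = path v ++ [b]) → f v < f w) ↔ Inc T f := by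
  induction T with
  | nil => exact ⟨fun _ => trivial, fun _ v => by cases v⟩
  | node l r hl hr =>
    constructor
    · intro h
      have h1 : Inc l (fun x => f (.left x)) := (hl _).1 (fun v w ⟨b, hb⟩ =>
        h _ _ ⟨b, by simp [path, hb]⟩)
      have h2 : Inc r (fun x => f (.right x)) := (hr _).1 (fun v w ⟨b, hb⟩ =>
        h _ _ ⟨b, by simp [path, hb]⟩)
      refine ⟨?_, ?_, h1, h2⟩
      · intro x
        cases l with
        | nil => cases x
        | node a b =>
          have h0 : f .root < f (.left .root) := h _ _ ⟨false, rfl⟩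
          cases x with
          | root => exact h0
          | left x => exact h0.trans (h1.1 x)
          | right x => exact h0.trans (h1.2.1 x)
      · intro x
        cases r with
        | nil => cases x
        | node a b =>
          have h0 : f .root < f (.right .root) := h _ _ ⟨true, rfl⟩
          cases x with
          | root => exact h0
          | left x => exact h0.trans (h2.1 x)
          | right x => exact h0.trans (h2.2.1 x)
    · rintro ⟨h1, h2, h3, h4⟩ v w ⟨b, hb⟩
      cases w with
      | root => simp [path] at hb
      | left w =>
        cases v with
        | root => exact h1 w
        | left v => exact (hl _).2 h3 v w ⟨b, by simpa [path] using hb⟩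
        | right v => simp [path] at hb
      | right w =>
        cases v with
        | root => exact h2 w
        | right v => exact (hr _).2 h4 v w ⟨b, by simpa [path] using hb⟩
        | left v => simp [path] at hb

def L (T : BinTree) (S : Finset ℕ) : Type :=
  {f : P T → ℕ // Function.Injective f ∧ (∀ y, y ∈ S ↔ ∃ x, f x = y) ∧ Inc T f}

instance (T : BinTree) (S : Finset ℕ) : Finite (L T S) := by
  refine Finite.of_injective (β := P T → S) (fun f x => ⟨f.1 x, (f.2.2.1 _).2 ⟨x, rfl⟩⟩) ?_
  intro f g h
  apply Subtype.ext
  funext x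
  exact congrArg Subtype.val (congrFun h x)

def comb {l r : BinTree} (m : ℕ) (g : P l → ℕ) (h : P r → ℕ) : P (.node l r) → ℕ
  | .root => m
  | .left x => g x
  | .right x => h x

theorem comb_mem {l r : BinTree} {S A : Finset ℕ} {m : ℕ} (hm : m ∈ S) (hmin : ∀ y ∈ S, m ≤ y)
    (hA : A ⊆ S.erase m) (g : L l A) (h : L r (S.erase m \ A)) :
    Function.Injective (comb m g.1 h.1) ∧ (∀ y, y ∈ S ↔ ∃ x, comb m g.1 h.1 x = y) ∧
      Inc (.node l r) (comb m g.1 h.1) := by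
  obtain ⟨g, g1, g2, g3⟩ := g
  obtain ⟨h, h1, h2, h3⟩ := h
  have gA : ∀ x, g x ∈ A := fun x => (g2 _).2 ⟨x, rfl⟩
  have hB : ∀ x, h x ∈ S.erase m \ A := fun x => (h2 _).2 ⟨x, rfl⟩
  have gS : ∀ x, g x ≠ m ∧ g x ∈ S := fun x => Finset.mem_erase.1 (hA (gA x))
  have hS : ∀ x, (h x ≠ m ∧ h x ∈ S) ∧ h x ∉ A := fun x => by
    have := hB x
    rwa [Finset.mem_sdiff, Finset.mem_erase] at this
  refine ⟨?_, ?_, ?_⟩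
  · intro x y hxy
    cases x with
    | root =>
      cases y with
      | root => rfl
      | left y => exact absurd hxy.symm (gS y).1
      | right y => exact absurd hxy.symm (hS y).1.1
    | left x =>
      cases y with
      | root => exact absurd hxy (gS x).1
      | left y => exact congrArg _ (g1 hxy)
      | right y =>
        have e : g x = h y := hxy
        exact absurd (e ▸ gA x) (hS y).2
    | right x =>
      cases y with
      | root => exact absurd hxy (hS x).1.1
      | right y => exact congrArg _ (h1 hxy)
      | left y =>
        have e : h x = g y := hxy
        exact absurd (e ▸ gA y) (hS x).2
  · intro y
    constructor
    · intro hy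
      by_cases e : y = m
      · exact ⟨.root, e.symm⟩
      by_cases hyA : y ∈ A
      · obtain ⟨x, hx⟩ := (g2 y).1 hyA
        exact ⟨.left x, hx⟩
      · obtain ⟨x, hx⟩ := (h2 y).1 (by simp [e, hyA, hy])
        exact ⟨.right x, hx⟩
    · rintro ⟨x, rfl⟩
      cases x with
      | root => exact hm
      | left x => exact (gS x).2
      | right x => exact (hS x).1.2
  · exact ⟨fun x => lt_of_le_of_ne (hmin _ (gS x).2) (gS x).1.symm,
      fun x => lt_of_le_of_ne (hmin _ (hS x).1.2) (hS x).1.1.symm, g3, h3⟩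

def glue {l r : BinTree} {S : Finset ℕ} {m : ℕ} (hm : m ∈ S) (hmin : ∀ y ∈ S, m ≤ y)
    (t : Σ A : {A // A ∈ (S.erase m).powersetCard l.size}, L l A.1 × L r (S.erase m \ A.1)) :
    L (.node l r) S :=
  ⟨comb m t.2.1.1 t.2.2.1, comb_mem hm hmin (Finset.mem_powersetCard.1 t.1.2).1 t.2.1 t.2.2⟩

theorem glue_bij {l r : BinTree} {S : Finset ℕ} {m : ℕ} (hm : m ∈ S) (hmin : ∀ y ∈ S, m ≤ y) :
    Function.Bijective (glue (l := l) (r := r) hm hmin) := by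
  classical
  constructor
  · rintro ⟨⟨A, hA⟩, g, h⟩ ⟨⟨A', hA'⟩, g', h'⟩ e
    have e0 : comb m g.1 h.1 = comb m g'.1 h'.1 := congrArg Subtype.val e
    have eg : g.1 = g'.1 := funext fun x => congrFun e0 (.left x)
    have eh : h.1 = h'.1 := funext fun x => congrFun e0 (.right x)
    have eA : A = A' := by
      ext y
      have h1 := g.2.2.1 y
      have h2 := g'.2.2.1 y
      rw [eg] at h1
      exact h1.trans h2.symm
    subst eA
    have : g = g' := Subtype.ext eg
    subst this
    have : h = h' := Subtype.ext eh
    subst this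
    rfl
  · rintro ⟨f, f1, f2, f3, f4, f5, f6⟩
    have hroot : f .root = m := by
      obtain ⟨x, hx⟩ := (f2 m).1 hm
      have := hmin _ ((f2 _).2 ⟨.root, rfl⟩)
      cases x with
      | root => exact hx
      | left x => have := f3 x; omega
      | right x => have := f4 x; omega
    have : Fintype (P l) := Fintype.ofFinite _
    let A : Finset ℕ := Finset.univ.image (fun x : P l => f (.left x))
    have memA : ∀ y, y ∈ A ↔ ∃ x : P l, f (.left x) = y := by simp [A]
    have hinj : Function.Injective (fun x : P l => f (.left x)) := fun x y h => by
      have := f1 h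
      cases this
      rfl
    have cA : A.card = l.size := by
      rw [Finset.card_image_of_injective _ hinj, Finset.card_univ, ← Nat.card_eq_fintype_card,
        (finite_card l).2]
    have sA : A ⊆ S.erase m := by
      intro y hy
      obtain ⟨x, rfl⟩ := (memA y).1 hy
      have := f3 x
      exact Finset.mem_erase.2 ⟨by omega, (f2 _).2 ⟨_, rfl⟩⟩
    refine ⟨⟨⟨A, Finset.mem_powersetCard.2 ⟨sA, cA⟩⟩, ⟨fun x => f (.left x), hinj, memA, f5⟩,
      ⟨fun x => f (.right x), ?_, ?_, f6⟩⟩, ?_⟩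
    · intro x y h
      have := f1 h
      cases this
      rfl
    · intro y
      simp only [Finset.mem_sdiff, Finset.mem_erase, memA, f2]
      constructor
      · rintro ⟨⟨h1, x, rfl⟩, h2⟩
        cases x with
        | root => exact absurd hroot h1
        | left x => exact absurd ⟨x, rfl⟩ h2
        | right x => exact ⟨x, rfl⟩
      · rintro ⟨x, rfl⟩
        refine ⟨⟨?_, _, rfl⟩, ?_⟩
        · have := f4 x; omega
        · rintro ⟨y, hy⟩
          have := f1 hy
          cases this
    · apply Subtype.ext
      funext x
      cases x with
      | root => exact hroot.symm
      | left x => rfl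
      | right x => rfl

theorem count (T : BinTree) (S : Finset ℕ) (hS : S.card = T.size) :
    (Nat.card (L T S) : ℝ) * T.hookProd (fun h => (h : ℝ)) = (T.size.factorial : ℝ) := by
  induction T generalizing S with
  | nil =>
    have hS' : S = ∅ := Finset.card_eq_zero.1 hS
    subst hS'
    have : IsEmpty (P .nil) := ⟨fun x => by cases x⟩
    have : Nat.card (L .nil ∅) = 1 := by
      rw [Nat.card_eq_one_iff_unique]
      refine ⟨⟨fun a b => Subtype.ext (funext fun x => by cases x)⟩,
        ⟨⟨fun _ => 0, ⟨fun x => isEmptyElim x, fun y => by simp, trivial⟩⟩⟩⟩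
    simp [this, BinTree.hookProd, BinTree.size]
  | node l r hl hr =>
    have hne : S.Nonempty := by
      rw [← Finset.card_pos, hS]; simp [BinTree.size]
    have hm := S.min'_mem hne
    have hmin : ∀ y ∈ S, S.min' hne ≤ y := fun y hy => S.min'_le y hy
    generalize S.min' hne = m at hm hmin
    have hE : (S.erase m).card = l.size + r.size := by
      rw [Finset.card_erase_of_mem hm, hS]; simp [BinTree.size]
    rw [← Nat.card_congr (Equiv.ofBijective _ (glue_bij (l := l) (r := r) hm hmin)),
      Nat.card_sigma]
    simp only [Nat.card_prod, BinTree.hookProd, BinTree.size]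
    push_cast
    have key : ∀ A : {A // A ∈ (S.erase m).powersetCard l.size},
        ((Nat.card (L l A.1) : ℝ) * (Nat.card (L r (S.erase m \ A.1)) : ℝ)) *
          (l.hookProd (fun h => (h : ℝ)) * r.hookProd (fun h => (h : ℝ))) =
        (l.size.factorial : ℝ) * r.size.factorial := by
      rintro ⟨A, hA⟩
      obtain ⟨h1, h2⟩ := Finset.mem_powersetCard.1 hA
      rw [← hl A h2, ← hr (S.erase m \ A) (by rw [Finset.card_sdiff_of_subset h1, hE, h2]; omega)]
      ring
    have e : ∀ x a b c : ℝ, x * (a * b * c) = a * (x * (b * c)) := by intros; ring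
    rw [e, Finset.sum_mul, Finset.sum_congr rfl (fun A _ => key A), Finset.sum_const,
      Finset.card_univ, Fintype.card_coe, Finset.card_powersetCard, hE, Nat.factorial_succ,
      ← Nat.add_choose_mul_factorial_mul_factorial l.size r.size, Nat.choose_symm_add]
    simp only [nsmul_eq_mul]
    push_cast
    ring

noncomputable def toL (T : BinTree)
    (ℓ : {ℓ : {p // p ∈ T.positions} → Fin T.size //
    Function.Bijective ℓ ∧
    ∀ v w : {p // p ∈ T.positions}, (∃ b, (w : List Bool) = (v : List Bool) ++ [b]) → ℓ v < ℓ w}) :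
    L T (Finset.range T.size) :=
  ⟨fun x => (ℓ.1 (equivPos T x)).val,
    fun x y h => (equivPos T).injective (ℓ.2.1.1 (Fin.ext h)),
    fun y => by
      rw [Finset.mem_range]
      constructor
      · intro hy
        obtain ⟨p, hp⟩ := ℓ.2.1.2 ⟨y, hy⟩
        exact ⟨(equivPos T).symm p, by simp [hp]⟩
      · rintro ⟨x, rfl⟩
        exact Fin.isLt _,
    (inc_iff _).1 fun v w h => ℓ.2.2 _ _ h⟩

theorem toL_bij (T : BinTree) : Function.Bijective (toL T) := by
  constructor
  · intro a b h
    apply Subtype.ext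
    funext p
    apply Fin.ext
    have := congrFun (congrArg Subtype.val h) ((equivPos T).symm p)
    simpa [toL] using this
  · rintro ⟨f, f1, f2, f3⟩
    have lt : ∀ x, f x < T.size := fun x => Finset.mem_range.1 ((f2 _).2 ⟨x, rfl⟩)
    refine ⟨⟨fun p => ⟨f ((equivPos T).symm p), lt _⟩, ⟨?_, ?_⟩, ?_⟩, ?_⟩
    · intro p q h
      exact (equivPos T).symm.injective (f1 (Fin.mk.inj h))
    · rintro ⟨y, hy⟩
      obtain ⟨x, rfl⟩ := (f2 y).1 (Finset.mem_range.2 hy)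
      exact ⟨equivPos T x, by simp⟩
    · intro v w h
      refine (inc_iff f).2 f3 _ _ ?_
      simpa only [← equivPos_val, Equiv.apply_symm_apply] using h
    · apply Subtype.ext
      funext x
      simp [toL]

theorem hook (T : BinTree) :
    (T.incLabelings : ℝ) * T.hookProd (fun h => (h : ℝ)) = (T.size.factorial : ℝ) := by
  rw [← count T (Finset.range T.size) (by simp), BinTree.incLabelings,
    Nat.card_congr (Equiv.ofBijective _ (toL_bij T))]

theorem size_completion (T : BinTree) : T.completion.size = 2 * T.size + 1 := by
  induction T with
  | nil => rfl
  | node l r hl hr => simp only [BinTree.completion, BinTree.size, hl, hr]; ring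

theorem hook_completion (T : BinTree) : T.completion.hookProd (fun h => (h : ℝ)) =
    T.hookProd (fun h => (2 * h + 1 : ℝ)) := by
  induction T with
  | nil => simp [BinTree.completion, BinTree.hookProd, BinTree.size]
  | node l r hl hr =>
    simp only [BinTree.completion, BinTree.hookProd, hl, hr, size_completion]
    push_cast
    ring

theorem hook_pos (T : BinTree) : 0 < T.hookProd (fun h => (2 * h + 1 : ℝ)) := by
  induction T with
  | nil => simp [BinTree.hookProd]
  | node l r hl hr => simp only [BinTree.hookProd]; positivity

end HookAux

/-- For a binary tree `T` with `n` vertices, the number of increasing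
labelings of its completion `T̂` is `f^{T̂} = (2n+1)! / ∏_{v ∈ T} (2h_v+1)`,
the hook lengths `h_v` being computed in `T`. -/
theorem completion_hook_length_formula (T : BinTree) :
    (T.completion.incLabelings : ℝ) =
      (Nat.factorial (2 * T.size + 1) : ℝ) / T.hookProd (fun h => (2 * h + 1 : ℝ)) := by
  rw [eq_div_iff (HookAux.hook_pos T).ne', ← HookAux.hook_completion, HookAux.hook,
    HookAux.size_completion]
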